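/- arXiv:2408.05424 — 7 statements merged into one kernel-verified Lean document; each statement's English description precedes it below -/
import Mathlib

section
/- Let G be a finite simple graph with maximum degree Δ and minimum degree δ, and let v_i v_j be any edge of G whose degree pair is not {Δ, δ}, i.e., it is not the case that one endpoint has degree Δ and the other has degree δ. Then d_i·d_j/(d_i² + d_j²) ≥ (Δ−1)·δ/((Δ−1)² + δ²). -/
theorem aux_deg (a b D d : ℕ) (ha : a ≤ D) (hb : d ≤ b) (hd : d < D)
    (h : ¬(a = D ∧ b = d)) : (a : ℝ) * d ≤ ((D : ℝ) - 1) * b := by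
  obtain ⟨p, rfl⟩ : ∃ p, D = p + 1 := ⟨D - 1, by omega⟩
  have key : a * d ≤ p * b := by
    by_cases h1 : a ≤ p
    · exact Nat.mul_le_mul h1 hb
    · have h2 : a = p + 1 := by omega
      have h3 : d + 1 ≤ b := by omega
      subst h2
      have := Nat.mul_le_mul_left p h3
      nlinarith
  have : (a : ℝ) * d ≤ p * b := by exact_mod_cast key
  push_cast
  simpa using this


/-- For any edge `v_i v_j` of a finite simple graph `G` (with `Δ ≥ 2`)
whose degree pair is not `{Δ, δ}`, one has
`d_i·d_j/(d_i² + d_j²) ≥ (Δ−1)·δ/((Δ−1)² + δ²)`. -/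
theorem stmt_1 {V : Type*} [Fintype V] [DecidableEq V] (G : SimpleGraph V)
    [DecidableRel G.Adj] (vi vj : V) (hadj : G.Adj vi vj)
    (hΔ : 2 ≤ G.maxDegree)
    (hne : ¬((G.degree vi = G.maxDegree ∧ G.degree vj = G.minDegree) ∨
             (G.degree vi = G.minDegree ∧ G.degree vj = G.maxDegree))) :
    ((G.degree vi : ℝ) * (G.degree vj : ℝ)) /
        ((G.degree vi : ℝ) ^ 2 + (G.degree vj : ℝ) ^ 2) ≥
      (((G.maxDegree : ℝ) - 1) * (G.minDegree : ℝ)) /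
        (((G.maxDegree : ℝ) - 1) ^ 2 + (G.minDegree : ℝ) ^ 2) := by
  have hi1 := G.degree_le_maxDegree vi
  have hj1 := G.degree_le_maxDegree vj
  have hi2 := G.minDegree_le_degree vi
  have hj2 := G.minDegree_le_degree vj
  have hi0 : 0 < G.degree vi := (G.degree_pos_iff_exists_adj vi).2 ⟨vj, hadj⟩
  generalize G.degree vi = a at *
  generalize G.degree vj = b at *
  generalize G.maxDegree = D at *
  generalize G.minDegree = d at *
  have hd : d < D := by omega
  have k1 := aux_deg a b D d hi1 hj2 hd (by tauto)
  have k2 := aux_deg b a D d hj1 hi2 hd (by tauto)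
  have ha : (0 : ℝ) < a := by exact_mod_cast hi0
  have hD : (2 : ℝ) ≤ D := by exact_mod_cast hΔ
  have hp : (0 : ℝ) < (D : ℝ) - 1 := by linarith
  rw [ge_iff_le, div_le_div_iff₀ (by positivity) (by positivity)]
  nlinarith [mul_nonneg (sub_nonneg.2 k1) (sub_nonneg.2 k2)]
end

section
/- Let T be a tree of order n ≥ 4 and let v_i v_j be any edge of T whose degree pair {d_i, d_j} is not {n−1, 1}. Then d_i·d_j/(d_i² + d_j²) ≥ (n−2)/((n−2)² + 1) > (n−1)/((n−1)² + 1). -/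
/-- For a tree `T` of order `n ≥ 4` and any edge `v_i v_j` of `T`
whose degree pair is not `{n−1, 1}`, one has
`d_i·d_j/(d_i² + d_j²) ≥ (n−2)/((n−2)² + 1) > (n−1)/((n−1)² + 1)`. -/
theorem stmt_7 {V : Type*} [Fintype V] [DecidableEq V] (T : SimpleGraph V)
    [DecidableRel T.Adj] (n : ℕ) (hn : 4 ≤ n) (hcard : Fintype.card V = n)
    (htree : T.IsTree) (vi vj : V) (hadj : T.Adj vi vj)
    (hne : ¬((T.degree vi = n - 1 ∧ T.degree vj = 1) ∨
             (T.degree vi = 1 ∧ T.degree vj = n - 1))) :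
    ((T.degree vi : ℝ) * (T.degree vj : ℝ)) /
        ((T.degree vi : ℝ) ^ 2 + (T.degree vj : ℝ) ^ 2) ≥
      ((n : ℝ) - 2) / (((n : ℝ) - 2) ^ 2 + 1) ∧
    ((n : ℝ) - 2) / (((n : ℝ) - 2) ^ 2 + 1) > ((n : ℝ) - 1) / (((n : ℝ) - 1) ^ 2 + 1) := by
  have hne' : vi ≠ vj := hadj.ne
  have : Nontrivial V := ⟨vi, vj, hne'⟩
  have hpos : ∀ v, 1 ≤ T.degree v := fun v => htree.connected.preconnected.degree_pos_of_nontrivial v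
  have hsum := T.sum_degrees_eq_twice_card_edges
  have hE := htree.card_edgeFinset
  have hle : T.degree vi + T.degree vj ≤ n := by
    have h1 : ∑ v, T.degree v = ∑ v, (T.degree v - 1) + n := by
      rw [← hcard, ← Finset.card_univ, Finset.card_eq_sum_ones, ← Finset.sum_add_distrib]
      exact Finset.sum_congr rfl fun v _ => by have := hpos v; omega
    have h2 : ∑ v ∈ ({vi, vj} : Finset V), (T.degree v - 1) ≤ ∑ v, (T.degree v - 1) :=
      Finset.sum_le_sum_of_subset (Finset.subset_univ _)
    rw [Finset.sum_pair hne'] at h2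
    have := hpos vi
    have := hpos vj
    omega
  have hi := hpos vi
  have hj := hpos vj
  have hi2 : T.degree vi + 2 ≤ n := by omega
  have hj2 : T.degree vj + 2 ≤ n := by omega
  generalize T.degree vi = a at *
  generalize T.degree vj = b at *
  obtain ⟨m, rfl⟩ : ∃ m, n = m + 2 := ⟨n - 2, by omega⟩
  have ha : (1:ℝ) ≤ a := by exact_mod_cast hi
  have hb : (1:ℝ) ≤ b := by exact_mod_cast hj
  have ham : (a:ℝ) ≤ m := by exact_mod_cast (by omega : a ≤ m)
  have hbm : (b:ℝ) ≤ m := by exact_mod_cast (by omega : b ≤ m)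
  have hm : (2:ℝ) ≤ m := by exact_mod_cast (by omega : 2 ≤ m)
  push_cast
  constructor
  · rw [ge_iff_le, div_le_div_iff₀ (by positivity) (by positivity)]
    have h1 : (0:ℝ) ≤ m * a - b := by nlinarith
    have h2 : (0:ℝ) ≤ m * b - a := by nlinarith
    nlinarith [mul_nonneg h1 h2]
  · rw [gt_iff_lt, div_lt_div_iff₀ (by positivity) (by positivity)]
    nlinarith
end

section
/- Let G be a finite simple graph with m edges, maximum degree Δ ≥ 2 and minimum degree δ, and let ℓ be the number of edges v_i v_j of G with degree pair {d_i, d_j} = {Δ, δ}. Then ISDD(G) ≥ (Δ·δ/(Δ² + δ²))·ℓ + ((Δ−1)·δ/((Δ−1)² + δ²))·(m − ℓ). -/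
/-- The inverse symmetric division deg index
`ISDD(G) = Σ_{v_i v_j ∈ E(G)} d_i·d_j/(d_i² + d_j²)`. -/
noncomputable def ISDD {V : Type*} [Fintype V] [DecidableEq V] (G : SimpleGraph V)
    [DecidableRel G.Adj] : ℝ :=
  ∑ e ∈ G.edgeFinset,
    Sym2.lift ⟨fun i j => ((G.degree i : ℝ) * (G.degree j : ℝ)) /
      ((G.degree i : ℝ) ^ 2 + (G.degree j : ℝ) ^ 2), by intro a b; ring⟩ e

theorem aux_nat (D d a b : ℕ) (hd : d ≤ D) (ha : a ≤ D + 1) (hb : d ≤ b)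
    (h : ¬ (a = D + 1 ∧ b = d)) : d * a ≤ b * D := by
  rcases Nat.lt_or_ge D a with h1 | h1
  · have h2 : a = D + 1 := by omega
    have h3 : d + 1 ≤ b := by
      have : b ≠ d := fun hh => h ⟨h2, hh⟩
      omega
    subst h2
    calc d * (D + 1) = d * D + d := by ring
      _ ≤ d * D + D := by omega
      _ = (d + 1) * D := by ring
      _ ≤ b * D := Nat.mul_le_mul_right _ h3
  · exact Nat.mul_le_mul hb h1

theorem aux_real (D d a b : ℝ) (hD : 0 < D) (ha : 0 < a)
    (h1 : d * a ≤ b * D) (h2 : d * b ≤ a * D) :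
    D * d / (D ^ 2 + d ^ 2) ≤ a * b / (a ^ 2 + b ^ 2) := by
  rw [div_le_div_iff₀ (by positivity) (by positivity)]
  nlinarith [mul_nonneg (sub_nonneg.2 h1) (sub_nonneg.2 h2)]

/-- If `G` has `m` edges, maximum degree `Δ ≥ 2`, minimum degree `δ`,
and `ℓ` edges whose degree pair is `{Δ, δ}`, then
`ISDD(G) ≥ (Δδ/(Δ²+δ²))·ℓ + ((Δ−1)δ/((Δ−1)²+δ²))·(m − ℓ)`. -/
theorem stmt_8 {V : Type*} [Fintype V] [DecidableEq V] (G : SimpleGraph V)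
    [DecidableRel G.Adj] (hΔ : 2 ≤ G.maxDegree) (m ℓ : ℕ)
    (hm : m = G.edgeFinset.card)
    (hℓ : ℓ = (G.edgeFinset.filter
      (fun e => Sym2.map (fun v => G.degree v) e = s(G.maxDegree, G.minDegree))).card) :
    ISDD G ≥ ((G.maxDegree : ℝ) * (G.minDegree : ℝ)) /
        ((G.maxDegree : ℝ) ^ 2 + (G.minDegree : ℝ) ^ 2) * (ℓ : ℝ) +
      (((G.maxDegree : ℝ) - 1) * (G.minDegree : ℝ)) /
        (((G.maxDegree : ℝ) - 1) ^ 2 + (G.minDegree : ℝ) ^ 2) * ((m : ℝ) - (ℓ : ℝ)) := by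
  obtain ⟨D, hD⟩ : ∃ D, G.maxDegree = D + 1 := ⟨G.maxDegree - 1, by omega⟩
  have hD1 : 1 ≤ D := by omega
  set A : ℝ := ((G.maxDegree : ℝ) * (G.minDegree : ℝ)) /
        ((G.maxDegree : ℝ) ^ 2 + (G.minDegree : ℝ) ^ 2) with hA
  set B : ℝ := (((G.maxDegree : ℝ) - 1) * (G.minDegree : ℝ)) /
        (((G.maxDegree : ℝ) - 1) ^ 2 + (G.minDegree : ℝ) ^ 2) with hB
  have key : ∑ e ∈ G.edgeFinset,
      (if Sym2.map (fun v => G.degree v) e = s(G.maxDegree, G.minDegree) then A else B)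
      = A * (ℓ : ℝ) + B * ((m : ℝ) - (ℓ : ℝ)) := by
    rw [Finset.sum_ite, Finset.sum_const, Finset.sum_const, ← hℓ]
    have := Finset.card_filter_add_card_filter_not (s := G.edgeFinset)
      (fun e => Sym2.map (fun v => G.degree v) e = s(G.maxDegree, G.minDegree))
    rw [← hℓ, ← hm] at this
    rw [← this]
    push_cast
    simp only [nsmul_eq_mul]
    ring
  rw [← key, ISDD, ge_iff_le]
  apply Finset.sum_le_sum
  intro e he
  induction e using Sym2.ind with
  | _ a b =>
  rw [SimpleGraph.mem_edgeFinset, SimpleGraph.mem_edgeSet] at he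
  have ha0 : 0 < G.degree a := (G.degree_pos_iff_exists_adj a).2 ⟨b, he⟩
  have ha1 := G.degree_le_maxDegree a
  have hb1 := G.degree_le_maxDegree b
  have ha2 := G.minDegree_le_degree a
  have hb2 := G.minDegree_le_degree b
  split_ifs with h
  · rw [Sym2.map_mk, Sym2.eq_iff] at h
    simp only [Sym2.lift_mk]
    rcases h with ⟨h1, h2⟩ | ⟨h1, h2⟩
    · rw [h1, h2]
    · rw [h1, h2, hA]
      apply le_of_eq
      ring
  · rw [Sym2.map_mk, Sym2.eq_iff] at h
    simp only [Sym2.lift_mk]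
    have hd : G.minDegree ≤ D := by
      by_contra hc
      apply h
      left
      omega
    have h1 := aux_nat D G.minDegree (G.degree a) (G.degree b) hd (by omega) hb2
      (fun hh => h (Or.inl ⟨by omega, hh.2⟩))
    have h2 := aux_nat D G.minDegree (G.degree b) (G.degree a) hd (by omega) ha2
      (fun hh => h (Or.inr ⟨hh.2, by omega⟩))
    have hDr : (G.maxDegree : ℝ) - 1 = D := by rw [hD]; push_cast; ring
    rw [hB, hDr]
    exact aux_real D G.minDegree (G.degree a) (G.degree b) (by exact_mod_cast hD1)
      (by exact_mod_cast ha0) (by exact_mod_cast h1) (by exact_mod_cast h2)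
end

section
/- Let G be a finite simple graph with m edges and maximum degree Δ ≥ 2, and let k be the number of edges v_i v_j of G with d_i = d_j. Then ISDD(G) ≤ k/2 + (Δ·(Δ−1)/(Δ² + (Δ−1)²))·(m − k). -/
lemma isdd_aux (a b D : ℝ) (ha : 0 ≤ a) (hab : a + 1 ≤ b) (hb : b ≤ D) (hD : 2 ≤ D) :
    a * b / (a ^ 2 + b ^ 2) ≤ D * (D - 1) / (D ^ 2 + (D - 1) ^ 2) := by
  have h1 : 0 < a ^ 2 + b ^ 2 := by nlinarith [sq_nonneg a]
  have h2 : 0 < D ^ 2 + (D - 1) ^ 2 := by nlinarith [sq_nonneg (D - 1)]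
  rw [div_le_div_iff₀ h1 h2]
  have h3 : 0 ≤ (D - 1) * b - D * a := by nlinarith
  have h4 : 0 ≤ D * b - (D - 1) * a := by nlinarith
  nlinarith [mul_nonneg h3 h4]

/-- If `G` has `m` edges, maximum degree `Δ ≥ 2`, and `k` edges whose
endpoints have equal degrees, then `ISDD(G) ≤ k/2 + (Δ·(Δ−1)/(Δ²+(Δ−1)²))·(m − k)`. -/
theorem stmt_11 {V : Type*} [Fintype V] [DecidableEq V] (G : SimpleGraph V)
    [DecidableRel G.Adj] (hΔ : 2 ≤ G.maxDegree) (m k : ℕ)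
    (hm : m = G.edgeFinset.card)
    (hk : k = (G.edgeFinset.filter
      (fun e => (Sym2.map (fun v => G.degree v) e).IsDiag)).card) :
    ISDD G ≤ (k : ℝ) / 2 +
      ((G.maxDegree : ℝ) * ((G.maxDegree : ℝ) - 1)) /
        ((G.maxDegree : ℝ) ^ 2 + ((G.maxDegree : ℝ) - 1) ^ 2) * ((m : ℝ) - (k : ℝ)) := by
  subst hm hk
  set c : ℝ := ((G.maxDegree : ℝ) * ((G.maxDegree : ℝ) - 1)) /
        ((G.maxDegree : ℝ) ^ 2 + ((G.maxDegree : ℝ) - 1) ^ 2) with hc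
  have hD : (2 : ℝ) ≤ G.maxDegree := by exact_mod_cast hΔ
  have hcard := Finset.card_filter_add_card_filter_not (s := G.edgeFinset)
    (fun e => (Sym2.map (fun v => G.degree v) e).IsDiag)
  have hsub : (G.edgeFinset.card : ℝ) - ((G.edgeFinset.filter
      (fun e => (Sym2.map (fun v => G.degree v) e).IsDiag)).card : ℝ) =
      ((G.edgeFinset.filter
      (fun e => ¬ (Sym2.map (fun v => G.degree v) e).IsDiag)).card : ℝ) := by
    rw [← hcard]; push_cast; ring
  rw [hsub, ISDD, ← Finset.sum_filter_add_sum_filter_not G.edgeFinset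
    (fun e => (Sym2.map (fun v => G.degree v) e).IsDiag)]
  apply add_le_add
  · rw [div_eq_mul_inv, ← nsmul_eq_mul]
    apply Finset.sum_le_card_nsmul
    intro e he
    induction e using Sym2.ind with
    | _ x y =>
      simp only [Finset.mem_filter, Sym2.map_mk, Sym2.mk_isDiag_iff] at he
      simp only [Sym2.lift_mk, he.2]
      rcases eq_or_ne (G.degree y : ℝ) 0 with h | h
      · simp [h]
      · apply le_of_eq; field_simp; norm_num
  · rw [mul_comm c, ← nsmul_eq_mul]
    apply Finset.sum_le_card_nsmul
    intro e he
    induction e using Sym2.ind with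
    | _ x y =>
      simp only [Finset.mem_filter, Sym2.map_mk, Sym2.mk_isDiag_iff] at he
      simp only [Sym2.lift_mk]
      have hx : (G.degree x : ℝ) ≤ G.maxDegree := by exact_mod_cast G.degree_le_maxDegree x
      have hy : (G.degree y : ℝ) ≤ G.maxDegree := by exact_mod_cast G.degree_le_maxDegree y
      rcases lt_or_gt_of_ne he.2 with h | h
      · exact isdd_aux _ _ _ (Nat.cast_nonneg _) (by exact_mod_cast h) hy hD
      · rw [mul_comm, add_comm]
        exact isdd_aux _ _ _ (Nat.cast_nonneg _) (by exact_mod_cast h) hx hD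
end

section
/- Let G be a finite simple graph with m ≥ 1 edges. Then ISDD(G) ≥ GA(G)²/(4m). -/
/-- The geometric-arithmetic index
`GA(G) = Σ_{v_i v_j ∈ E(G)} 2·√(d_i·d_j)/(d_i + d_j)`. -/
noncomputable def GA {V : Type*} [Fintype V] [DecidableEq V] (G : SimpleGraph V)
    [DecidableRel G.Adj] : ℝ :=
  ∑ e ∈ G.edgeFinset,
    Sym2.lift ⟨fun i j => 2 * Real.sqrt ((G.degree i : ℝ) * (G.degree j : ℝ)) /
      ((G.degree i : ℝ) + (G.degree j : ℝ)), by
        intro a b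
        simp only
        rw [mul_comm ((G.degree a : ℝ)), add_comm ((G.degree a : ℝ))]⟩ e

lemma isdd_term_aux (a b : ℝ) (ha : 0 ≤ a) (hb : 0 ≤ b) :
    (2 * Real.sqrt (a * b) / (a + b)) ^ 2 ≤ 4 * ((a * b) / (a ^ 2 + b ^ 2)) := by
  rw [div_pow, mul_pow, Real.sq_sqrt (mul_nonneg ha hb)]
  rcases eq_or_lt_of_le ha with h | h
  · simp [← h]
  · have h1 : 0 < a ^ 2 + b ^ 2 := by positivity
    rw [← mul_div_assoc]
    have h2 : a ^ 2 + b ^ 2 ≤ (a + b) ^ 2 := by nlinarith [mul_nonneg ha hb]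
    have h3 : (2 : ℝ) ^ 2 * (a * b) = 4 * (a * b) := by ring
    rw [h3]
    exact div_le_div_of_nonneg_left (by positivity) h1 h2

/-- If `G` has `m ≥ 1` edges, then `ISDD(G) ≥ GA(G)²/(4m)`. -/
theorem stmt_13 {V : Type*} [Fintype V] [DecidableEq V] (G : SimpleGraph V)
    [DecidableRel G.Adj] (m : ℕ) (hm : m = G.edgeFinset.card) (hm1 : 1 ≤ m) :
    ISDD G ≥ (GA G) ^ 2 / (4 * (m : ℝ)) := by
  have hmpos : (0 : ℝ) < m := by exact_mod_cast hm1
  rw [ge_iff_le, div_le_iff₀ (by positivity)]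
  unfold GA ISDD
  refine le_trans sq_sum_le_card_mul_sum_sq ?_
  rw [← hm]
  have key : ∀ x y : ℝ, x ≤ 4 * y → (m : ℝ) * x ≤ y * (4 * m) := by
    intro x y h
    nlinarith
  apply key
  rw [Finset.mul_sum]
  refine Finset.sum_le_sum ?_
  intro e _
  induction e using Sym2.ind with
  | _ x y =>
    simp only [Sym2.lift_mk]
    exact isdd_term_aux _ _ (Nat.cast_nonneg _) (Nat.cast_nonneg _)
end

section
/- Let G be a finite simple graph with m ≥ 1 edges and maximum degree Δ. Then ISDD(G) > GA(G)²/(4m); that is, the inequality ISDD(G) ≥ GA(G)²/(4m) is always strict for a graph with at least one edge. -/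
/-- If `G` has `m ≥ 1` edges, then `ISDD(G) > GA(G)²/(4m)`. -/
theorem stmt_16 {V : Type*} [Fintype V] [DecidableEq V] (G : SimpleGraph V)
    [DecidableRel G.Adj] (m : ℕ) (hm : m = G.edgeFinset.card) (hm1 : 1 ≤ m) :
    ISDD G > (GA G) ^ 2 / (4 * (m : ℝ)) := by
  subst hm
  have hne : G.edgeFinset.Nonempty := Finset.card_pos.mp hm1
  have hmpos : (0 : ℝ) < (G.edgeFinset.card : ℝ) := by exact_mod_cast hm1
  unfold ISDD GA
  rw [gt_iff_lt, div_lt_iff₀ (by positivity)]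
  refine lt_of_le_of_lt sq_sum_le_card_mul_sum_sq ?_
  rw [mul_comm (Finset.sum _ _), mul_comm (4 : ℝ), mul_assoc]
  refine mul_lt_mul_of_pos_left ?_ hmpos
  rw [Finset.mul_sum]
  refine Finset.sum_lt_sum_of_nonempty hne ?_
  intro e he
  induction e using Sym2.ind with
  | _ i j =>
    rw [SimpleGraph.mem_edgeFinset, SimpleGraph.mem_edgeSet] at he
    have hi : (0 : ℝ) < (G.degree i : ℝ) := by
      exact_mod_cast (G.degree_pos_iff_exists_adj i).mpr ⟨j, he⟩
    have hj : (0 : ℝ) < (G.degree j : ℝ) := by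
      exact_mod_cast (G.degree_pos_iff_exists_adj j).mpr ⟨i, he.symm⟩
    simp only [Sym2.lift_mk]
    generalize (G.degree i : ℝ) = a at *
    generalize (G.degree j : ℝ) = b at *
    have hab : 0 < a * b := mul_pos hi hj
    rw [div_pow, mul_pow, Real.sq_sqrt hab.le, ← mul_div_assoc]
    norm_num only
    apply div_lt_div_of_pos_left (by positivity) (by positivity)
    nlinarith
end

section
/- Let G be a finite simple graph with m ≥ 1 edges. Then ISDD(G) ≥ M₁(G)²/(2·F(G)) − m/2. -/
/-- The first Zagreb index `M₁(G) = Σ_{v ∈ V(G)} d_v²`. -/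
noncomputable def M1 {V : Type*} [Fintype V] [DecidableEq V] (G : SimpleGraph V)
    [DecidableRel G.Adj] : ℝ :=
  ∑ v : V, (G.degree v : ℝ) ^ 2

/-- The forgotten topological index `F(G) = Σ_{v ∈ V(G)} d_v³`. -/
noncomputable def forgotten {V : Type*} [Fintype V] [DecidableEq V] (G : SimpleGraph V)
    [DecidableRel G.Adj] : ℝ :=
  ∑ v : V, (G.degree v : ℝ) ^ 3

theorem edge_sum_aux {V : Type*} [Fintype V] [DecidableEq V] (G : SimpleGraph V)
    [DecidableRel G.Adj] (f : V → ℝ) :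
    ∑ v : V, (G.degree v : ℝ) * f v =
      ∑ e ∈ G.edgeFinset, Sym2.lift ⟨fun i j => f i + f j, by intro a b; ring⟩ e := by
  have h1 : ∀ v : V, (G.degree v : ℝ) * f v = ∑ e ∈ G.edgeFinset, if v ∈ e then f v else 0 := by
    intro v
    rw [← Finset.sum_filter, Finset.sum_const, nsmul_eq_mul, ← G.incidenceFinset_eq_filter,
      G.card_incidenceFinset_eq_degree]
  rw [Finset.sum_congr rfl (fun v _ => h1 v), Finset.sum_comm]
  refine Finset.sum_congr rfl ?_
  intro e he
  induction e using Sym2.ind with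
  | _ a b =>
    have hab : a ≠ b := by
      have : G.Adj a b := by simpa using he
      exact this.ne
    rw [← Finset.sum_filter]
    have : (Finset.univ.filter fun v => v ∈ s(a, b)) = {a, b} := by
      ext v; simp
    rw [this, Finset.sum_pair hab]
    rfl

/-- If `G` has `m ≥ 1` edges, then
`ISDD(G) ≥ M₁(G)²/(2·F(G)) − m/2`. -/
theorem stmt_18 {V : Type*} [Fintype V] [DecidableEq V] (G : SimpleGraph V)
    [DecidableRel G.Adj] (m : ℕ) (hm : m = G.edgeFinset.card) (hm1 : 1 ≤ m) :
    ISDD G ≥ (M1 G) ^ 2 / (2 * forgotten G) - (m : ℝ) / 2 := by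
  have hM : M1 G = ∑ e ∈ G.edgeFinset, Sym2.lift ⟨fun i j => (G.degree i : ℝ) + (G.degree j : ℝ),
      by intro a b; ring⟩ e := by
    rw [← edge_sum_aux G (fun v => (G.degree v : ℝ))]
    exact Finset.sum_congr rfl (fun v _ => by ring)
  have hF : forgotten G = ∑ e ∈ G.edgeFinset, Sym2.lift ⟨fun i j => (G.degree i : ℝ) ^ 2 +
      (G.degree j : ℝ) ^ 2, by intro a b; ring⟩ e := by
    rw [← edge_sum_aux G (fun v => (G.degree v : ℝ) ^ 2)]
    exact Finset.sum_congr rfl (fun v _ => by ring)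
  have hpos : ∀ e ∈ G.edgeFinset, 0 < Sym2.lift ⟨fun i j => (G.degree i : ℝ) ^ 2 +
      (G.degree j : ℝ) ^ 2, by intro a b; ring⟩ e := by
    intro e he
    induction e using Sym2.ind with
    | _ a b =>
      have hab : G.Adj a b := by simpa using he
      have ha : (0 : ℝ) < G.degree a := by
        exact_mod_cast (G.degree_pos_iff_exists_adj a).2 ⟨b, hab⟩
      change (0 : ℝ) < (G.degree a : ℝ) ^ 2 + (G.degree b : ℝ) ^ 2
      positivity
  have key := Finset.sq_sum_div_le_sum_sq_div G.edgeFinset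
    (Sym2.lift ⟨fun i j => (G.degree i : ℝ) + (G.degree j : ℝ), by intro a b; ring⟩) hpos
  rw [← hM, ← hF] at key
  have hI : 2 * ISDD G + m = ∑ e ∈ G.edgeFinset,
      (Sym2.lift ⟨fun i j => (G.degree i : ℝ) + (G.degree j : ℝ), by intro a b; ring⟩ e) ^ 2 /
      Sym2.lift ⟨fun i j => (G.degree i : ℝ) ^ 2 +
      (G.degree j : ℝ) ^ 2, by intro a b; ring⟩ e := by
    have hc : (m : ℝ) = ∑ e ∈ G.edgeFinset, (1 : ℝ) := by simp [hm]
    rw [hc, ISDD, Finset.mul_sum, ← Finset.sum_add_distrib]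
    refine Finset.sum_congr rfl ?_
    intro e he
    have hp := hpos e he
    induction e using Sym2.ind with
    | _ a b =>
      simp only [Sym2.lift_mk] at hp ⊢
      field_simp
      ring
  rw [← hI] at key
  have : (M1 G) ^ 2 / (2 * forgotten G) = (M1 G) ^ 2 / forgotten G / 2 := by
    rw [div_div, mul_comm]
  rw [this]
  linarith
end
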